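/- Let 𝔾 be a locally compact quantum group and let E : B(L²(𝔾)) → B(L²(𝔾)) be a completely bounded L∞(𝔾̂)-bimodule map. Then for every x ∈ B(L²(𝔾)) and every ω ∈ B(L²(𝔾))_*, one has (ω⊗id)Δ̄(E(x)) = E((ω⊗id)Δ̄(x)), where Δ̄ : B(L²(𝔾)) → L∞(𝔾) ⊗̄ B(L²(𝔾)) is the normal extension of the co-multiplication given by Δ̄(x) = W*(1⊗x)W. -/

import Mathlib

/-!
Common framework: an axiomatization of locally compact quantum groups (in the von Neumann
algebraic setting of Kustermans–Vaes) acting on a Hilbert space `H = L²(𝔾)`.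

Since completed Hilbert space tensor products are not available, the tensor square
`H2 = L²(𝔾) ⊗ L²(𝔾)` is axiomatized: a Hilbert space together with a bilinear map
`tmul` with total range satisfying `⟪a ⊗ b, c ⊗ d⟫ = ⟪a, c⟫⟪b, d⟫`, the induced tensor
product of operators `tensorOp`, tensor products `funcTensor` of normal functionals,
and the slice maps `sliceL = ω ⊗ id`, `sliceR = id ⊗ ω`.

Normal functionals (elements of the predual `B(H)_*`) are characterized concretely:
`ω(x) = ∑ ⟪ηₙ, x ξₙ⟫` with `∑‖ξₙ‖² , ∑‖ηₙ‖² < ∞`.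

Membership of an operator `X` on `H2` in a spatial tensor product `P ⊗̄ Q` of von Neumann
algebras is encoded, via the commutation theorem, as: `X` commutes with all `a' ⊗ b'`
with `a' ∈ P'`, `b' ∈ Q'`.

A locally compact quantum group is recorded through its left regular co-representation
`W ∈ L∞(𝔾) ⊗̄ L∞(𝔾̂)` and right regular co-representation `V ∈ L∞(𝔾̂)' ⊗̄ L∞(𝔾)`,
which implement the co-multiplication: `Δ(x) = W*(1 ⊗ x)W = V(x ⊗ 1)V*` for `x ∈ L∞(𝔾)`;
`Δ̄(x) := W*(1 ⊗ x)W` for arbitrary `x ∈ B(H)` is the canonical normal extension of `Δ`.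
-/

noncomputable section

open scoped ComplexOrder ComplexInnerProductSpace

namespace LCQGNote

/-- The bounded operators `B(H)`. -/
abbrev B (H : Type*) [NormedAddCommGroup H] [InnerProductSpace ℂ H] : Type _ := H →L[ℂ] H

variable (H H2 : Type*)
  [NormedAddCommGroup H] [InnerProductSpace ℂ H] [CompleteSpace H]
  [NormedAddCommGroup H2] [InnerProductSpace ℂ H2] [CompleteSpace H2]

/-- The vector functional `ω_{ξ,η} : x ↦ ⟨x ξ, η⟩` on `B(H)` (written here in the
Mathlib convention for inner products, which are conjugate-linear in the first slot). -/
def vecFunctional (ξ η : H) : B H →ₗ[ℂ] ℂ where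
  toFun x := ⟪η, x ξ⟫
  map_add' x y := by simp [inner_add_right]
  map_smul' c x := by simp [inner_smul_right]

/-- A functional on `B(H)` is normal (σ-weakly continuous, i.e. belongs to the predual
`B(H)_*`) iff it has the form `x ↦ ∑ ⟪ηₙ, x ξₙ⟫` with `(ξₙ), (ηₙ)` square-summable. -/
def IsNormalFunctional (ω : B H →ₗ[ℂ] ℂ) : Prop :=
  ∃ ξ η : ℕ → H, Summable (fun n => ‖ξ n‖ ^ 2) ∧ Summable (fun n => ‖η n‖ ^ 2) ∧
    ∀ x : B H, HasSum (fun n => ⟪η n, x (ξ n)⟫) (ω x)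

/-- `φ` is a state of the von Neumann algebra `N ⊆ B(H)`: it is unital and positive on `N`.
(Functionals on `N` are encoded as functionals on `B(H)`; only the restriction to `N`
matters, by the Hahn–Banach extension theorem.) -/
def IsStateOn (N : VonNeumannAlgebra H) (φ : B H →ₗ[ℂ] ℂ) : Prop :=
  φ 1 = 1 ∧ ∀ x : B H, x ∈ N → x.IsPositive → 0 ≤ φ x

/-- A conditional expectation of `B(H)` onto a von Neumann subalgebra `N`:
a unital positive projection `E : B(H) → B(H)` with range `N`. -/
structure IsConditionalExpectation (N : VonNeumannAlgebra H) (E : B H →ₗ[ℂ] B H) : Prop where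
  unital : E 1 = 1
  positive : ∀ x : B H, x.IsPositive → (E x).IsPositive
  mem_range : ∀ x : B H, E x ∈ N
  fixes : ∀ x ∈ N, E x = x

/-- The center of a von Neumann algebra `N`: elements of `N` commuting with all of `N`. -/
def center (N : VonNeumannAlgebra H) : Set (B H) := {z | z ∈ N ∧ ∀ y ∈ N, z * y = y * z}

/-- A von Neumann algebra `N ⊆ B(H)` is injective if there is a conditional expectation
of `B(H)` onto `N`. -/
def IsInjectiveVNA (N : VonNeumannAlgebra H) : Prop :=
  ∃ E : B H →ₗ[ℂ] B H, IsConditionalExpectation H N E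

/-- A locally compact quantum group `𝔾`, axiomatized over its Hilbert space `H = L²(𝔾)`
together with the tensor square `H2 = L²(𝔾) ⊗ L²(𝔾)`.  `M = L∞(𝔾)`, `Mhat = L∞(𝔾̂)`
(both acting canonically on `L²(𝔾)`). -/
structure LCQG where
  /-- `L∞(𝔾)` -/
  M : VonNeumannAlgebra H
  /-- `L∞(𝔾̂)`, the dual von Neumann algebra, also acting on `L²(𝔾)` -/
  Mhat : VonNeumannAlgebra H
  /-- the tensor map `H × H → H2 = H ⊗ H` -/
  tmul : H →ₗ[ℂ] H →ₗ[ℂ] H2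
  tmul_inner : ∀ a b c d : H, ⟪tmul a b, tmul c d⟫ = ⟪a, c⟫ * ⟪b, d⟫
  tmul_total : (Submodule.span ℂ {v : H2 | ∃ a b, v = tmul a b}).topologicalClosure = ⊤
  /-- the tensor product of operators: `tensorOp x y = x ⊗ y` on `H2` -/
  tensorOp : B H →ₗ[ℂ] B H →ₗ[ℂ] B H2
  tensorOp_apply : ∀ (x y : B H) (a b : H), tensorOp x y (tmul a b) = tmul (x a) (y b)
  /-- the flip (tensor swap) unitary `Σ` on `H2` -/
  flipU : B H2
  flipU_apply : ∀ a b : H, flipU (tmul a b) = tmul b a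
  /-- the tensor product `ω ⊗ ρ` of (normal) functionals -/
  funcTensor : (B H →ₗ[ℂ] ℂ) → (B H →ₗ[ℂ] ℂ) → (B H2 →ₗ[ℂ] ℂ)
  funcTensor_elem : ∀ ω ρ (x y : B H), funcTensor ω ρ (tensorOp x y) = ω x * ρ y
  funcTensor_normal : ∀ ω ρ, IsNormalFunctional H ω → IsNormalFunctional H ρ →
    IsNormalFunctional H2 (funcTensor ω ρ)
  /-- the left slice map `sliceL ω = ω ⊗ id : B(H2) → B(H)` -/
  sliceL : (B H →ₗ[ℂ] ℂ) → B H2 →ₗ[ℂ] B H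
  /-- the right slice map `sliceR ω = id ⊗ ω : B(H2) → B(H)` -/
  sliceR : (B H →ₗ[ℂ] ℂ) → B H2 →ₗ[ℂ] B H
  sliceL_char : ∀ ω X (ξ η : H),
    vecFunctional H ξ η (sliceL ω X) = funcTensor ω (vecFunctional H ξ η) X
  sliceR_char : ∀ ω X (ξ η : H),
    vecFunctional H ξ η (sliceR ω X) = funcTensor (vecFunctional H ξ η) ω X
  /-- the left regular co-representation `W` -/
  W : B H2
  W_unitary_l : star W * W = 1
  W_unitary_r : W * star W = 1
  /-- `W ∈ L∞(𝔾) ⊗̄ L∞(𝔾̂)` (via the commutation theorem for tensor products) -/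
  W_mem : ∀ a' ∈ M.commutant, ∀ b' ∈ Mhat.commutant, Commute W (tensorOp a' b')
  /-- the right regular co-representation `V` -/
  V : B H2
  V_unitary_l : star V * V = 1
  V_unitary_r : V * star V = 1
  /-- `V ∈ L∞(𝔾̂)' ⊗̄ L∞(𝔾)` (via the commutation theorem for tensor products) -/
  V_mem : ∀ a ∈ Mhat, ∀ b' ∈ M.commutant, Commute V (tensorOp a b')
  /-- `Δ` maps `L∞(𝔾)` into `L∞(𝔾) ⊗̄ L∞(𝔾)` -/
  Delta_mem : ∀ x ∈ M, ∀ a' ∈ M.commutant, ∀ b' ∈ M.commutant,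
    Commute (star W * tensorOp 1 x * W) (tensorOp a' b')
  /-- `V` also implements the co-multiplication: `Δ(x) = V(x ⊗ 1)V*` on `L∞(𝔾)` -/
  Delta_V : ∀ x ∈ M, star W * tensorOp 1 x * W = V * tensorOp x 1 * star V
  /-- slices of `Δ(x)`, `x ∈ L∞(𝔾)`, lie in `L∞(𝔾)` -/
  slice_Delta_mem : ∀ ω, ∀ x ∈ M, sliceL ω (star W * tensorOp 1 x * W) ∈ M
  /-- slices `(ω ⊗ id)(V (x ⊗ 1) V*)` lie in `L∞(𝔾)`, since `V ∈ L∞(𝔾̂)' ⊗̄ L∞(𝔾)` -/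
  sliceL_rConj_mem : ∀ ω (x : B H), sliceL ω (V * tensorOp x 1 * star V) ∈ M
  /-- the fixed-point characterization `L∞(𝔾̂) = {y : V(y ⊗ 1)V* = y ⊗ 1}`
  (cf. Kustermans–Vaes, proof of Proposition 4.2) -/
  fixedPoint_mem : ∀ y : B H, V * tensorOp y 1 * star V = tensorOp y 1 → y ∈ Mhat

namespace LCQG

variable {H H2} (Q : LCQG H H2)

/-- The (extended) co-multiplication `Δ̄ : B(L²(𝔾)) → L∞(𝔾) ⊗̄ B(L²(𝔾))`,
`Δ̄(x) = W*(1 ⊗ x)W`; its restriction to `L∞(𝔾)` is the co-multiplication `Δ`. -/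
def Delta (x : B H) : B H2 := star Q.W * Q.tensorOp 1 x * Q.W

/-- The map `x ↦ V (x ⊗ 1) V*` on `B(L²(𝔾))`. -/
def rConj : B H →ₗ[ℂ] B H2 where
  toFun x := Q.V * Q.tensorOp x 1 * star Q.V
  map_add' x y := by simp [mul_add, add_mul]
  map_smul' c x := by simp [mul_smul_comm, smul_mul_assoc]

/-- The left regular co-representation of the dual: `Ŵ = Σ W* Σ` (i.e. `σ(W)*`). -/
def What : B H2 := Q.flipU * star Q.W * Q.flipU

/-- The (extended) co-multiplication of the dual quantum group, `Δ̂(y) = Ŵ*(1 ⊗ y)Ŵ`. -/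
def Deltahat (y : B H) : B H2 := star Q.What * Q.tensorOp 1 y * Q.What

/-- `m` is a left-invariant mean on `L∞(𝔾)`: a state with
`m((ω ⊗ id)Δ(x)) = ω(1) m(x)` for all `x ∈ L∞(𝔾)` and normal `ω ∈ L¹(𝔾)`. -/
def IsLeftInvariantMean (m : B H →ₗ[ℂ] ℂ) : Prop :=
  IsStateOn H Q.M m ∧
    ∀ x ∈ Q.M, ∀ ω : B H →ₗ[ℂ] ℂ, IsNormalFunctional H ω →
      m (Q.sliceL ω (Q.Delta x)) = ω 1 * m x

/-- `𝔾` is amenable if it admits a left-invariant mean. -/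
def Amenable : Prop := ∃ m : B H →ₗ[ℂ] ℂ, Q.IsLeftInvariantMean m

/-- `𝔾` is quantum injective if there is a conditional expectation of `B(L²(𝔾))` onto
`L∞(𝔾)` mapping `L∞(𝔾̂)` into the center of `L∞(𝔾)`. -/
def QuantumInjective : Prop :=
  ∃ E : B H →ₗ[ℂ] B H, IsConditionalExpectation H Q.M E ∧
    ∀ x ∈ Q.Mhat, E x ∈ center H Q.M

end LCQG

section CompletelyBounded


/-- The inclusion of the `j`-th coordinate `H → H^n` (Hilbert direct sum). -/
def coordIncl (n : ℕ) (j : Fin n) : H →L[ℂ] PiLp 2 (fun _ : Fin n => H) :=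
  (PiLp.continuousLinearEquiv 2 ℂ (fun _ : Fin n => H)).symm.toContinuousLinearMap.comp
    (ContinuousLinearMap.pi fun i => if i = j then ContinuousLinearMap.id ℂ H else 0)

/-- The projection onto the `i`-th coordinate `H^n → H`. -/
def coordProj (n : ℕ) (i : Fin n) : PiLp 2 (fun _ : Fin n => H) →L[ℂ] H :=
  (ContinuousLinearMap.proj i).comp
    (PiLp.continuousLinearEquiv 2 ℂ (fun _ : Fin n => H)).toContinuousLinearMap

/-- The `n`-th matrix amplification `id_{Mₙ} ⊗ E` of a map `E : B(H) → B(H)`, acting on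
`B(H^n) ≅ Mₙ(B(H))` entrywise. -/
def amplify (E : B H →ₗ[ℂ] B H) (n : ℕ) (T : B (PiLp 2 fun _ : Fin n => H)) :
    B (PiLp 2 fun _ : Fin n => H) :=
  ∑ i : Fin n, ∑ j : Fin n,
    (coordIncl H n i).comp
      ((E ((coordProj H n i).comp (T.comp (coordIncl H n j)))).comp (coordProj H n j))

/-- A map `E : B(H) → B(H)` is completely bounded if the norms of all its matrix
amplifications `id_{Mₙ} ⊗ E : Mₙ(B(H)) → Mₙ(B(H))`, `n ∈ ℕ`, are uniformly bounded. -/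
def CompletelyBounded (E : B H →ₗ[ℂ] B H) : Prop :=
  ∃ C : ℝ, 0 ≤ C ∧ ∀ (n : ℕ) (T : B (PiLp 2 fun _ : Fin n => H)),
    ‖amplify H E n T‖ ≤ C * ‖T‖

end CompletelyBounded

/-!
If `(eᵢ)` is an orthonormal basis of `H` and `wᵢ(ξ) = (ω_{ξ,eᵢ} ⊗ id)(W)`, an element of
`L∞(𝔾̂)`, then inserting `∑ |eᵢ⟩⟨eᵢ| ⊗ 1 = 1` between `W*` and `(1 ⊗ x)W` gives the weak sum
`(ω_{ξ,η} ⊗ id)Δ̄(x) = ∑ wᵢ(η)* x wᵢ(ξ)`. A bimodule map `E` commutes with its finite partial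
sums, but need not be normal, so the tails `T` have to be controlled by hand. By Cauchy–Schwarz
`T T* ≤ c A`, where `A ∈ L∞(𝔾̂)` is the corresponding tail of `∑ wᵢ(η)* wᵢ(η)`; bounded
left-module maps preserve such estimates, `E(T) E(T)* ≤ ‖E‖² c A`, and `A → 0` weakly. Finally, a
normal functional is a norm-convergent sum of vector functionals.
-/

section CStarAlgebra

open Filter Topology

variable {A : Type*} [CStarAlgebra A] [PartialOrder A] [StarOrderedRing A]

lemma sqrt_mem {N : StarSubalgebra ℂ A} (hN : IsClosed (N : Set A)) {a : A} (ha : a ∈ N)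
    (ha₀ : 0 ≤ a) : CFC.sqrt a ∈ N := by
  rw [CFC.sqrt_eq_real_sqrt a]
  exact cfcₙ_mem (hs := hN) Real.sqrt ha

lemma exists_mul_eq_of_mul_star_le {s t : A} (hs : IsUnit s) (h : t * star t ≤ s * star s) :
    ∃ y : A, ‖y‖ ≤ 1 ∧ t = s * y := by
  obtain ⟨s, rfl⟩ := hs
  refine ⟨(s⁻¹ : Aˣ) * t, ?_, by simp⟩
  have hle : (s⁻¹ : Aˣ) * t * star ((s⁻¹ : Aˣ) * t) ≤ 1 := by
    simpa [mul_assoc, ← star_mul] using star_right_conjugate_le_conjugate h ((s⁻¹ : Aˣ) : A)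
  have := (CStarAlgebra.norm_le_one_iff_of_nonneg _ (mul_star_self_nonneg _)).2 hle
  rw [CStarRing.norm_self_mul_star] at this
  nlinarith [norm_nonneg ((s⁻¹ : Aˣ) * t)]

lemma mul_mul_star_le_norm_sq_smul (s z : A) :
    s * z * star (s * z) ≤ ‖z‖ ^ 2 • (s * star s) := by
  have h := CStarAlgebra.star_right_conjugate_le_norm_smul (a := s) (IsSelfAdjoint.mul_star_self z)
  rwa [CStarRing.norm_self_mul_star, ← sq, ← mul_assoc, mul_assoc _ (star z), ← star_mul] at h

-- If `r` is invertible then `t = √r y` with `‖y‖ ≤ 1`, so `E t = √r (E y)`; in general perturb `r`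
-- to `r + ε`.
theorem map_mul_star_map_le {N : StarSubalgebra ℂ A} (hN : IsClosed (N : Set A))
    {E : A →L[ℂ] A} (hE : ∀ a ∈ N, ∀ x, E (a * x) = a * E x) {r t : A} (hr : r ∈ N)
    (h : t * star t ≤ r) : E t * star (E t) ≤ ‖E‖ ^ 2 • r := by
  have hr₀ : 0 ≤ r := (mul_star_self_nonneg t).trans h
  have approx : ∀ ε : ℝ, 0 < ε → E t * star (E t) ≤ ‖E‖ ^ 2 • (r + algebraMap ℝ A ε) := by
    intro ε hε
    have hpos : IsStrictlyPositive (r + algebraMap ℝ A ε) :=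
      (isStrictlyPositive_algebraMap hε).nonneg_add hr₀
    set s := CFC.sqrt (r + algebraMap ℝ A ε)
    have hsN : s ∈ N := by
      refine sqrt_mem hN (add_mem hr ?_) hpos.nonneg
      rw [IsScalarTower.algebraMap_apply ℝ ℂ A]
      exact algebraMap_mem N _
    have hss : s * star s = r + algebraMap ℝ A ε := by
      rw [(CFC.sqrt_nonneg _).isSelfAdjoint.star_eq, CFC.sqrt_mul_sqrt_self _ hpos.nonneg]
    obtain ⟨y, hy, rfl⟩ : ∃ y : A, ‖y‖ ≤ 1 ∧ t = s * y := by
      refine exists_mul_eq_of_mul_star_le hpos.sqrt.isUnit ?_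
      rw [hss]
      exact h.trans (le_add_of_nonneg_right (algebraMap_nonneg A hε.le))
    calc E (s * y) * star (E (s * y)) = s * E y * star (s * E y) := by rw [hE s hsN]
      _ ≤ ‖E y‖ ^ 2 • (s * star s) := mul_mul_star_le_norm_sq_smul s (E y)
      _ ≤ ‖E‖ ^ 2 • (s * star s) := by
        gcongr
        · exact mul_star_self_nonneg s
        · exact E.unit_le_opNorm y hy
      _ = ‖E‖ ^ 2 • (r + algebraMap ℝ A ε) := by rw [hss]
  have hcont : Continuous fun ε : ℝ => ‖E‖ ^ 2 • (r + algebraMap ℝ A ε) := by fun_prop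
  have hlim : Tendsto (fun ε : ℝ => ‖E‖ ^ 2 • (r + algebraMap ℝ A ε)) (𝓝[>] 0)
      (𝓝 (‖E‖ ^ 2 • r)) := by
    simpa using (hcont.tendsto 0).mono_left nhdsWithin_le_nhds
  exact ge_of_tendsto hlim (eventually_nhdsWithin_of_forall approx)

end CStarAlgebra

section LoewnerOrder

variable {K : Type*} [NormedAddCommGroup K] [InnerProductSpace ℂ K] [CompleteSpace K]

lemma mul_star_le_iff_norm_sq_le {S R : B K} (hR : IsSelfAdjoint R) :
    S * star S ≤ R ↔ ∀ u, ‖star S u‖ ^ 2 ≤ RCLike.re ⟪u, R u⟫ := by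
  have hre (u : K) : (R - S * star S).reApplyInnerSelf u =
      RCLike.re ⟪u, R u⟫ - ‖star S u‖ ^ 2 := by
    rw [ContinuousLinearMap.reApplyInnerSelf, sub_apply, inner_sub_left, map_sub,
      mul_apply_eq_comp, inner_re_symm, ← ContinuousLinearMap.adjoint_inner_right,
      ← ContinuousLinearMap.star_eq_adjoint, inner_self_eq_norm_sq]
  simp only [ContinuousLinearMap.le_def, ContinuousLinearMap.isPositive_def', hre, sub_nonneg,
    hR.sub (IsSelfAdjoint.mul_star_self S), true_and]

lemma mul_star_le_iff_norm_inner_sq_le {S R : B K} (hR : 0 ≤ R) :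
    S * star S ≤ R ↔ ∀ u v, ‖⟪u, S v⟫‖ ^ 2 ≤ RCLike.re ⟪u, R u⟫ * ‖v‖ ^ 2 := by
  rw [mul_star_le_iff_norm_sq_le hR.isSelfAdjoint]
  refine ⟨fun h u v => ?_, fun h u => ?_⟩
  · calc ‖⟪u, S v⟫‖ ^ 2 = ‖⟪star S u, v⟫‖ ^ 2 := by
          rw [ContinuousLinearMap.star_eq_adjoint, ContinuousLinearMap.adjoint_inner_left]
      _ ≤ (‖star S u‖ * ‖v‖) ^ 2 := by gcongr; exact norm_inner_le_norm _ _
      _ = ‖star S u‖ ^ 2 * ‖v‖ ^ 2 := mul_pow _ _ 2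
      _ ≤ RCLike.re ⟪u, R u⟫ * ‖v‖ ^ 2 := by gcongr; exact h u
  · rcases eq_or_ne (star S u) 0 with h₀ | h₀
    · simpa [h₀] using ((ContinuousLinearMap.nonneg_iff_isPositive R).1 hR).re_inner_nonneg_right u
    · have huu := h u (star S u)
      rw [← ContinuousLinearMap.adjoint_inner_left, ← ContinuousLinearMap.star_eq_adjoint,
        inner_self_eq_norm_sq_to_K, norm_pow, RCLike.norm_ofReal, abs_norm, sq (_ ^ 2)] at huu
      exact le_of_mul_le_mul_right huu (by positivity)

end LoewnerOrder

section WeakSum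

open ContinuousLinearMapWOT Filter Topology

variable {K ι : Type*} [NormedAddCommGroup K] [InnerProductSpace ℂ K]

/-- `∑ i, f i = T` unconditionally in the weak operator topology of `B(K)`, expressed through
Mathlib's type synonym `K →WOT[ℂ] K` carrying that topology. -/
def HasWeakSum (f : ι → B K) (T : B K) : Prop :=
  HasSum (fun i => (ofCLM (f i) : K →WOT[ℂ] K)) (ofCLM T)

lemma ofCLM_sum (f : ι → B K) (F : Finset ι) :
    (ofCLM (∑ i ∈ F, f i) : K →WOT[ℂ] K) = ∑ i ∈ F, ofCLM (f i) :=
  map_sum (ContinuousLinearMap.WOTofCLM : (K →L[ℂ] K) →L[ℂ] (K →WOT[ℂ] K)) f F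

namespace HasWeakSum

variable {f : ι → B K} {T : B K}

lemma unique {T' : B K} (h : HasWeakSum f T) (h' : HasWeakSum f T') : T = T' :=
  ofCLM_injective (HasSum.unique h h')

lemma compl (h : HasWeakSum f T) (F : Finset ι) :
    HasWeakSum (fun i : {i // i ∉ F} => f i) (T - ∑ i ∈ F, f i) := by
  rw [HasWeakSum, ofCLM_sub, ofCLM_sum]
  exact (F.hasSum_compl_iff (f := fun i => (ofCLM (f i) : K →WOT[ℂ] K))).2
    (by rwa [sub_add_cancel])

end HasWeakSum

variable [CompleteSpace K]

lemma hasWeakSum_iff {f : ι → B K} {T : B K} :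
    HasWeakSum f T ↔ ∀ u v, HasSum (fun i => ⟪u, f i v⟫) ⟪u, T v⟫ := by
  rw [HasWeakSum, HasSum, tendsto_iff_forall_inner_apply_tendsto, forall_comm]
  simp only [← ofCLM_sum, coe_ofCLM, HasSum, sum_apply, inner_sum]

lemma isClosed_toCLM_preimage (N : VonNeumannAlgebra K) :
    IsClosed (toCLM ⁻¹' (N : Set (B K)) : Set (K →WOT[ℂ] K)) := by
  convert Set.isClosed_centralizer (toCLM ⁻¹' (N.commutant : Set (B K)) : Set (K →WOT[ℂ] K))
  ext T
  nth_rw 1 [← N.commutant_commutant]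
  simp only [Set.mem_preimage, SetLike.mem_coe, Set.mem_centralizer_iff,
    VonNeumannAlgebra.mem_commutant_iff (S := N.commutant)]
  exact ⟨fun h S hS => toCLM_injective (h _ hS), fun h S hS => congrArg toCLM (h (ofCLM S) hS)⟩

lemma isClosed_vonNeumannAlgebra (N : VonNeumannAlgebra K) : IsClosed (N : Set (B K)) :=
  (isClosed_toCLM_preimage N).preimage continuous_ofCLM

namespace HasWeakSum

variable {a b : ι → B K} {A D T x : B K}

lemma mem {f : ι → B K} {N : VonNeumannAlgebra K} (h : HasWeakSum f T) (hf : ∀ i, f i ∈ N) :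
    T ∈ N :=
  (isClosed_toCLM_preimage N).mem_of_tendsto h <| .of_forall fun F => by
    rw [← ofCLM_sum]
    exact sum_mem fun i _ => hf i

lemma hasSum_norm_sq (h : HasWeakSum (fun i => star (a i) * a i) A) (u : K) :
    HasSum (fun i => ‖a i u‖ ^ 2) (RCLike.re ⟪u, A u⟫) := by
  have := RCLike.hasSum_re ℂ (hasWeakSum_iff.1 h u u)
  simpa [ContinuousLinearMap.star_eq_adjoint, ContinuousLinearMap.adjoint_inner_right,
    ← Complex.ofReal_pow] using this

lemma nonneg (h : HasWeakSum (fun i => star (a i) * a i) A) : 0 ≤ A := by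
  rw [ContinuousLinearMap.nonneg_iff_isPositive, ContinuousLinearMap.isPositive_iff_complex]
  intro u
  have hsum : HasSum (fun i => ((‖a i u‖ ^ 2 : ℝ) : ℂ)) ⟪u, A u⟫ := by
    simpa [ContinuousLinearMap.star_eq_adjoint, ContinuousLinearMap.adjoint_inner_right]
      using hasWeakSum_iff.1 h u u
  have hinner : 0 ≤ ⟪A u, u⟫ := by
    rw [← inner_conj_symm]
    exact star_nonneg_iff.2 (hsum.nonneg fun i => Complex.zero_le_real.2 (sq_nonneg _))
  exact ⟨(Complex.eq_re_of_ofReal_le (r := 0) (by simpa using hinner)).symm,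
    (RCLike.nonneg_iff.1 hinner).1⟩

lemma norm_inner_sq_le (hA : HasWeakSum (fun i => star (a i) * a i) A)
    (hD : HasWeakSum (fun i => star (b i) * b i) D)
    (hT : HasWeakSum (fun i => star (a i) * x * b i) T) (u v : K) :
    ‖⟪u, T v⟫‖ ^ 2 ≤ ‖x‖ ^ 2 * RCLike.re ⟪u, A u⟫ * RCLike.re ⟪v, D v⟫ := by
  refine le_of_tendsto' ((Tendsto.norm (hasWeakSum_iff.1 hT u v)).pow 2) fun F => ?_
  have hA' := sum_le_hasSum F (fun i _ => sq_nonneg ‖a i u‖) (hA.hasSum_norm_sq u)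
  have hD' := sum_le_hasSum F (fun i _ => sq_nonneg ‖b i v‖) (hD.hasSum_norm_sq v)
  have hterm (i : ι) : ‖⟪u, (star (a i) * x * b i) v⟫‖ ≤ ‖x‖ * (‖a i u‖ * ‖b i v‖) := by
    rw [mul_assoc, mul_apply_eq_comp, ContinuousLinearMap.star_eq_adjoint,
      ContinuousLinearMap.adjoint_inner_right, mul_apply_eq_comp, mul_left_comm]
    exact (norm_inner_le_norm _ _).trans (by gcongr; exact x.le_opNorm _)
  calc ‖∑ i ∈ F, ⟪u, (star (a i) * x * b i) v⟫‖ ^ 2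
      ≤ (‖x‖ * ∑ i ∈ F, ‖a i u‖ * ‖b i v‖) ^ 2 := by
        gcongr
        rw [Finset.mul_sum]
        exact norm_sum_le_of_le F fun i _ => hterm i
    _ ≤ ‖x‖ ^ 2 * ((∑ i ∈ F, ‖a i u‖ ^ 2) * ∑ i ∈ F, ‖b i v‖ ^ 2) := by
        rw [mul_pow]
        gcongr
        exact Finset.sum_mul_sq_le_sq_mul_sq _ _ _
    _ ≤ ‖x‖ ^ 2 * (RCLike.re ⟪u, A u⟫ * RCLike.re ⟪v, D v⟫) := by
        gcongr
        exact (Finset.sum_nonneg fun i _ => sq_nonneg _).trans hA'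
    _ = ‖x‖ ^ 2 * RCLike.re ⟪u, A u⟫ * RCLike.re ⟪v, D v⟫ := by ring

lemma mul_star_le (hA : HasWeakSum (fun i => star (a i) * a i) A)
    (hD : HasWeakSum (fun i => star (b i) * b i) D)
    (hT : HasWeakSum (fun i => star (a i) * x * b i) T) :
    T * star T ≤ (‖x‖ ^ 2 * ‖D‖) • A := by
  rw [mul_star_le_iff_norm_inner_sq_le (smul_nonneg (by positivity) hA.nonneg)]
  intro u v
  have hu : 0 ≤ RCLike.re ⟪u, A u⟫ := (hA.hasSum_norm_sq u).nonneg fun i => sq_nonneg _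
  have hv : RCLike.re ⟪v, D v⟫ ≤ ‖D‖ * ‖v‖ ^ 2 := by
    calc RCLike.re ⟪v, D v⟫ ≤ ‖v‖ * ‖D v‖ := re_inner_le_norm _ _
      _ ≤ ‖v‖ * (‖D‖ * ‖v‖) := by gcongr; exact D.le_opNorm v
      _ = ‖D‖ * ‖v‖ ^ 2 := by ring
  calc ‖⟪u, T v⟫‖ ^ 2 ≤ ‖x‖ ^ 2 * RCLike.re ⟪u, A u⟫ * RCLike.re ⟪v, D v⟫ :=
        norm_inner_sq_le hA hD hT u v
    _ ≤ ‖x‖ ^ 2 * RCLike.re ⟪u, A u⟫ * (‖D‖ * ‖v‖ ^ 2) := by gcongr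
    _ = RCLike.re ⟪u, ((‖x‖ ^ 2 * ‖D‖) • A) u⟫ * ‖v‖ ^ 2 := by
        rw [_root_.smul_apply, inner_smul_right_eq_smul, RCLike.smul_re]
        ring

lemma norm_inner_map_sq_le {N : VonNeumannAlgebra K} {E : B K →L[ℂ] B K}
    (hE : ∀ c ∈ N, ∀ y, E (c * y) = c * E y) (ha : ∀ i, a i ∈ N)
    (hA : HasWeakSum (fun i => star (a i) * a i) A)
    (hD : HasWeakSum (fun i => star (b i) * b i) D)
    (hT : HasWeakSum (fun i => star (a i) * x * b i) T) (u v : K) :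
    ‖⟪u, E T v⟫‖ ^ 2 ≤ ‖E‖ ^ 2 * (‖x‖ ^ 2 * ‖D‖) * ‖v‖ ^ 2 * RCLike.re ⟪u, A u⟫ := by
  have hAN : (‖x‖ ^ 2 * ‖D‖) • A ∈ N.toStarSubalgebra :=
    N.toStarSubalgebra.toSubalgebra.smul_mem
      (hA.mem fun i => mul_mem (star_mem (ha i)) (ha i)) ((‖x‖ ^ 2 * ‖D‖ : ℝ) : ℂ)
  have hle := map_mul_star_map_le (isClosed_vonNeumannAlgebra N) hE hAN (mul_star_le hA hD hT)
  have hpos : 0 ≤ ‖E‖ ^ 2 • (‖x‖ ^ 2 * ‖D‖) • A :=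
    smul_nonneg (by positivity) (smul_nonneg (by positivity) hA.nonneg)
  refine ((mul_star_le_iff_norm_inner_sq_le hpos).1 hle u v).trans_eq ?_
  rw [smul_smul, _root_.smul_apply, inner_smul_right_eq_smul, RCLike.smul_re]
  ring

lemma norm_sum_inner_sub_inner_map_sq_le {N : VonNeumannAlgebra K} {E : B K →L[ℂ] B K}
    (hT : HasWeakSum (fun i => star (a i) * x * b i) T)
    (hE : ∀ c ∈ N, ∀ d ∈ N, ∀ y, E (c * y * d) = c * E y * d)
    (ha : ∀ i, a i ∈ N) (hb : ∀ i, b i ∈ N)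
    (hA : HasWeakSum (fun i => star (a i) * a i) A)
    (hD : HasWeakSum (fun i => star (b i) * b i) D) (u v : K) (F : Finset ι) :
    ‖∑ i ∈ F, ⟪u, (star (a i) * E x * b i) v⟫ - ⟪u, E T v⟫‖ ^ 2 ≤
      ‖E‖ ^ 2 * (‖x‖ ^ 2 * ‖D‖) * ‖v‖ ^ 2 * (RCLike.re ⟪u, A u⟫ - ∑ i ∈ F, ‖a i u‖ ^ 2) := by
  have hleft : ∀ c ∈ N, ∀ y, E (c * y) = c * E y := fun c hc y => by
    simpa using hE c hc 1 (one_mem N) y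
  have hET : E (T - ∑ i ∈ F, star (a i) * x * b i) = E T - ∑ i ∈ F, star (a i) * E x * b i := by
    rw [map_sub, map_sum]
    exact congrArg _ (Finset.sum_congr rfl fun i _ => hE _ (star_mem (ha i)) _ (hb i) x)
  have hET_inner : ‖⟪u, E (T - ∑ i ∈ F, star (a i) * x * b i) v⟫‖ =
      ‖∑ i ∈ F, ⟪u, (star (a i) * E x * b i) v⟫ - ⟪u, E T v⟫‖ := by
    rw [hET, _root_.sub_apply, sum_apply, inner_sub_right, inner_sum, norm_sub_rev]
  have hA_inner : RCLike.re ⟪u, (A - ∑ i ∈ F, star (a i) * a i) u⟫ =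
      RCLike.re ⟪u, A u⟫ - ∑ i ∈ F, ‖a i u‖ ^ 2 := by
    rw [_root_.sub_apply, sum_apply, inner_sub_right, inner_sum, map_sub, map_sum]
    simp [ContinuousLinearMap.star_eq_adjoint, ContinuousLinearMap.adjoint_inner_right,
      ← Complex.ofReal_pow]
  have hD_le : ‖D - ∑ i ∈ F, star (b i) * b i‖ ≤ ‖D‖ :=
    CStarAlgebra.norm_le_norm_of_nonneg_of_le (hD.compl F).nonneg <|
      sub_le_self _ (Finset.sum_nonneg fun i _ => star_mul_self_nonneg _)
  rw [← hET_inner, ← hA_inner]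
  refine (norm_inner_map_sq_le hleft (fun i : {i // i ∉ F} => ha i) (hA.compl F)
    (hD.compl F) (hT.compl F) u v).trans ?_
  have := ((hA.compl F).hasSum_norm_sq u).nonneg fun i => sq_nonneg _
  gcongr

theorem map {N : VonNeumannAlgebra K} {E : B K →L[ℂ] B K}
    (hT : HasWeakSum (fun i => star (a i) * x * b i) T)
    (hE : ∀ c ∈ N, ∀ d ∈ N, ∀ y, E (c * y * d) = c * E y * d)
    (ha : ∀ i, a i ∈ N) (hb : ∀ i, b i ∈ N)
    (hA : HasWeakSum (fun i => star (a i) * a i) A)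
    (hD : HasWeakSum (fun i => star (b i) * b i) D) :
    HasWeakSum (fun i => star (a i) * E x * b i) (E T) := by
  refine hasWeakSum_iff.2 fun u v => tendsto_iff_norm_sub_tendsto_zero.2 ?_
  have htail : Tendsto (fun F : Finset ι => ‖E‖ ^ 2 * (‖x‖ ^ 2 * ‖D‖) * ‖v‖ ^ 2 *
      (RCLike.re ⟪u, A u⟫ - ∑ i ∈ F, ‖a i u‖ ^ 2)) atTop (𝓝 0) := by
    simpa using (Tendsto.const_sub (RCLike.re ⟪u, A u⟫) (hA.hasSum_norm_sq u)).const_mul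
      (‖E‖ ^ 2 * (‖x‖ ^ 2 * ‖D‖) * ‖v‖ ^ 2)
  simpa using (squeeze_zero (fun F => sq_nonneg _)
    (norm_sum_inner_sub_inner_map_sq_le hT hE ha hb hA hD u v) htail).sqrt

end HasWeakSum

end WeakSum

section NormalFunctional

open Filter Topology InnerProductSpace

variable {K ι : Type*} [NormedAddCommGroup K] [InnerProductSpace ℂ K]

lemma summable_mul_of_summable_sq {f g : ι → ℝ} (hf : Summable fun i => f i ^ 2)
    (hg : Summable fun i => g i ^ 2) : Summable fun i => f i * g i :=
  .of_norm_bounded (hf.add hg) fun i => by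
    rw [Real.norm_eq_abs, abs_le]
    constructor <;> nlinarith [sq_nonneg (f i - g i), sq_nonneg (f i + g i)]

lemma norm_inner_apply_le (X : B K) (u v : K) : ‖⟪u, X v⟫‖ ≤ ‖X‖ * (‖u‖ * ‖v‖) :=
  calc ‖⟪u, X v⟫‖ ≤ ‖u‖ * ‖X v‖ := norm_inner_le_norm _ _
    _ ≤ ‖u‖ * (‖X‖ * ‖v‖) := by gcongr; exact X.le_opNorm v
    _ = ‖X‖ * (‖u‖ * ‖v‖) := mul_left_comm _ _ _

lemma exists_isNormalFunctional {ξ η : ℕ → K} (hξ : Summable fun n => ‖ξ n‖ ^ 2)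
    (hη : Summable fun n => ‖η n‖ ^ 2) :
    ∃ ω : B K →ₗ[ℂ] ℂ, IsNormalFunctional K ω ∧
      ∀ X : B K, HasSum (fun n => ⟪η n, X (ξ n)⟫) (ω X) := by
  have hsum (X : B K) : HasSum (fun n => ⟪η n, X (ξ n)⟫) (∑' n, ⟪η n, X (ξ n)⟫) :=
    (Summable.of_norm_bounded ((summable_mul_of_summable_sq hη hξ).mul_left ‖X‖)
      fun n => norm_inner_apply_le X _ _).hasSum
  let ω : B K →ₗ[ℂ] ℂ :=
    { toFun := fun X => ∑' n, ⟪η n, X (ξ n)⟫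
      map_add' := fun X Y => by
        simpa [inner_add_right] using ((hsum X).add (hsum Y)).tsum_eq
      map_smul' := fun c X => by
        simpa [inner_smul_right] using ((hsum X).mul_left c).tsum_eq }
  exact ⟨ω, ⟨ξ, η, hξ, hη, hsum⟩, hsum⟩

lemma isNormalFunctional_vecFunctional (ξ η : K) :
    IsNormalFunctional K (vecFunctional K ξ η) := by
  refine ⟨Pi.single 0 ξ, Pi.single 0 η, ?_, ?_, fun x => ?_⟩
  · exact summable_of_ne_finset_zero (s := {0}) fun n hn => by simp_all
  · exact summable_of_ne_finset_zero (s := {0}) fun n hn => by simp_all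
  · simpa [vecFunctional] using hasSum_single (f := fun n : ℕ =>
      ⟪(Pi.single 0 η : ℕ → K) n, x ((Pi.single 0 ξ : ℕ → K) n)⟫) 0 fun n hn => by simp [hn]

lemma IsNormalFunctional.tendsto {α : Type*} {l : Filter α} {ω : B K →ₗ[ℂ] ℂ}
    (hω : IsNormalFunctional K ω) {S : α → B K} {T : B K} {C : ℝ} (hS : ∀ a, ‖S a‖ ≤ C)
    (hST : ∀ u v, Tendsto (fun a => ⟪u, S a v⟫) l (𝓝 ⟪u, T v⟫)) :
    Tendsto (fun a => ω (S a)) l (𝓝 (ω T)) := by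
  obtain ⟨ξ, η, hξ, hη, h⟩ := hω
  simp only [← (h _).tsum_eq]
  refine tendsto_tsum_of_dominated_convergence
    ((summable_mul_of_summable_sq hη hξ).mul_left C) (fun n => hST _ _) (.of_forall fun a n => ?_)
  exact (norm_inner_apply_le _ _ _).trans (by gcongr; exact hS a)

/-- The orthogonal projection onto the span of the vectors `e i`, `i ∈ F`, of a Hilbert basis.
Compressing by these projections approximates operators by finite rank ones. -/
def finiteProjection (e : HilbertBasis ι ℂ K) (F : Finset ι) : B K :=
  ∑ i ∈ F, rankOne ℂ (e i) (e i)

lemma finiteProjection_apply (e : HilbertBasis ι ℂ K) (F : Finset ι) (v : K) :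
    finiteProjection e F v = ∑ i ∈ F, ⟪e i, v⟫ • e i := by
  simp [finiteProjection]

lemma tendsto_finiteProjection (e : HilbertBasis ι ℂ K) (v : K) :
    Tendsto (fun F => finiteProjection e F v) atTop (𝓝 v) := by
  simp only [finiteProjection_apply, ← e.repr_apply_apply]
  exact e.hasSum_repr v

lemma finiteProjection_mul_mul (e : HilbertBasis ι ℂ K) (F : Finset ι) (X : B K) :
    finiteProjection e F * X * finiteProjection e F =
      ∑ i ∈ F, ∑ j ∈ F, ⟪e i, X (e j)⟫ • rankOne ℂ (e i) (e j) := by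
  ext v
  rw [Finset.sum_comm]
  simp [finiteProjection, Finset.sum_mul, Finset.mul_sum, smul_smul, mul_comm]

variable [CompleteSpace K]

lemma isStarProjection_finiteProjection (e : HilbertBasis ι ℂ K) (F : Finset ι) :
    IsStarProjection (finiteProjection e F) where
  isIdempotentElem := by
    classical
    ext v
    rw [mul_apply_eq_comp, finiteProjection_apply e F v, map_sum]
    refine Finset.sum_congr rfl fun i hi => ?_
    simp [finiteProjection_apply, orthonormal_iff_ite.1 e.orthonormal, hi]
  isSelfAdjoint := by
    simp [IsSelfAdjoint, finiteProjection, ContinuousLinearMap.star_eq_adjoint]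

lemma IsNormalFunctional.tendsto_finiteProjection {ω : B K →ₗ[ℂ] ℂ}
    (hω : IsNormalFunctional K ω) (e : HilbertBasis ι ℂ K) (X : B K) :
    Tendsto (fun F => ω (finiteProjection e F * X * finiteProjection e F)) atTop (𝓝 (ω X)) := by
  have hP (F : Finset ι) := isStarProjection_finiteProjection e F
  refine hω.tendsto (C := 1 * ‖X‖ * 1) (fun F => ?_) fun u v => ?_
  · refine (norm_mul_le _ _).trans (mul_le_mul ((norm_mul_le _ _).trans ?_) (hP F).norm_le
      (norm_nonneg _) (by positivity))
    gcongr
    exact (hP F).norm_le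
  · have hinner (F : Finset ι) : ⟪u, (finiteProjection e F * X * finiteProjection e F) v⟫ =
        ⟪finiteProjection e F u, X (finiteProjection e F v)⟫ := by
      nth_rw 3 [← (hP F).isSelfAdjoint.star_eq]
      rw [ContinuousLinearMap.star_eq_adjoint, ContinuousLinearMap.adjoint_inner_left]
      rfl
    simp only [hinner]
    exact (LCQGNote.tendsto_finiteProjection e u).inner
      ((X.continuous.tendsto v).comp (LCQGNote.tendsto_finiteProjection e v))

theorem IsNormalFunctional.ext_hilbertBasis {ω ρ : B K →ₗ[ℂ] ℂ} (hω : IsNormalFunctional K ω)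
    (hρ : IsNormalFunctional K ρ) (e : HilbertBasis ι ℂ K)
    (h : ∀ i j, ω (rankOne ℂ (e i) (e j)) = ρ (rankOne ℂ (e i) (e j))) : ω = ρ := by
  ext X
  refine tendsto_nhds_unique (hω.tendsto_finiteProjection e X)
    ((hρ.tendsto_finiteProjection e X).congr fun F => ?_)
  simp only [finiteProjection_mul_mul, map_sum, map_smul, h]

end NormalFunctional

section TensorSquare

open ContinuousLinearMap InnerProductSpace

lemma ext_hilbertBasis {K ι G : Type*} [NormedAddCommGroup K] [InnerProductSpace ℂ K]
    [NormedAddCommGroup G] [NormedSpace ℂ G] (e : HilbertBasis ι ℂ K) {S T : K →L[ℂ] G}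
    (h : ∀ i, S (e i) = T (e i)) : S = T :=
  ext_on (Submodule.dense_iff_topologicalClosure_eq_top.2 e.dense_span)
    (Set.forall_mem_range.2 h)

namespace LCQG

variable {H H2} (Q : LCQG H H2)

lemma norm_tmul (a b : H) : ‖Q.tmul a b‖ = ‖a‖ * ‖b‖ := by
  have h : ‖Q.tmul a b‖ ^ 2 = (‖a‖ * ‖b‖) ^ 2 := by
    rw [mul_pow]
    have := Q.tmul_inner a b a b
    simp only [inner_self_eq_norm_sq_to_K] at this
    exact_mod_cast this
  exact (sq_eq_sq₀ (norm_nonneg _) (by positivity)).1 h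

/-- The tensor map `H × H → H ⊗ H` as a continuous bilinear map; `Q.tmulL a` is the creation
operator `b ↦ a ⊗ b`. -/
def tmulL : H →L[ℂ] H →L[ℂ] H2 :=
  Q.tmul.mkContinuous₂ 1 fun a b => by rw [norm_tmul, one_mul]

@[simp]
lemma tmulL_apply (a b : H) : Q.tmulL a b = Q.tmul a b := rfl

lemma norm_tmulL_le (a : H) : ‖Q.tmulL a‖ ≤ ‖a‖ :=
  opNorm_le_bound _ (norm_nonneg a) fun b => (Q.norm_tmul a b).le

lemma ext_tmul {G : Type*} [NormedAddCommGroup G] [NormedSpace ℂ G] {S T : H2 →L[ℂ] G}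
    (h : ∀ a b, S (Q.tmul a b) = T (Q.tmul a b)) : S = T := by
  refine ext_on (Submodule.dense_iff_topologicalClosure_eq_top.2 Q.tmul_total) ?_
  rintro _ ⟨a, b, rfl⟩
  exact h a b

lemma ext_tmul_hilbertBasis {G ι : Type*} [NormedAddCommGroup G] [NormedSpace ℂ G]
    (e : HilbertBasis ι ℂ H) {S T : H2 →L[ℂ] G}
    (h : ∀ i j, S (Q.tmul (e i) (e j)) = T (Q.tmul (e i) (e j))) : S = T := by
  have hleft (i : ι) : S ∘L Q.tmulL (e i) = T ∘L Q.tmulL (e i) := ext_hilbertBasis e (h i)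
  refine Q.ext_tmul fun a b => ?_
  have hright : S ∘L Q.tmulL.flip b = T ∘L Q.tmulL.flip b :=
    ext_hilbertBasis e fun i => DFunLike.congr_fun (hleft i) b
  exact DFunLike.congr_fun hright a

lemma adjoint_tmulL_tmul (a c d : H) : adjoint (Q.tmulL a) (Q.tmul c d) = ⟪a, c⟫ • d := by
  refine ext_inner_left ℂ fun v => ?_
  rw [adjoint_inner_right, tmulL_apply, Q.tmul_inner, inner_smul_right]

lemma tensorOp_rankOne (a b c d : H) :
    Q.tensorOp (rankOne ℂ a b) (rankOne ℂ c d) = rankOne ℂ (Q.tmul a c) (Q.tmul b d) :=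
  Q.ext_tmul fun u v => by
    simp [Q.tensorOp_apply, Q.tmul_inner, smul_smul, mul_comm]

/-- The Hilbert basis `e i ⊗ e j` of `H ⊗ H` induced by a Hilbert basis `e` of `H`. -/
def tensorBasis {ι : Type*} (e : HilbertBasis ι ℂ H) : HilbertBasis (ι × ι) ℂ H2 :=
  .mkOfOrthogonalEqBot (v := fun p => Q.tmul (e p.1) (e p.2))
    (by
      classical
      rw [orthonormal_iff_ite]
      intro p q
      simp [Q.tmul_inner, orthonormal_iff_ite.1 e.orthonormal, Prod.ext_iff, ← ite_and, and_comm])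
    (by
      refine (Submodule.eq_bot_iff _).2 fun z hz => ?_
      have hinner : innerSL ℂ z = 0 := Q.ext_tmul_hilbertBasis e fun i j =>
        (Submodule.mem_orthogonal' _ z).1 hz _ (Submodule.subset_span ⟨(i, j), rfl⟩)
      simpa using congrArg norm hinner)

@[simp]
lemma tensorBasis_apply {ι : Type*} (e : HilbertBasis ι ℂ H) (p : ι × ι) :
    Q.tensorBasis e p = Q.tmul (e p.1) (e p.2) := by
  simp [tensorBasis]

lemma hasSum_inner_adjoint_tmulL {ι : Type*} (e : HilbertBasis ι ℂ H) (y z : H2) :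
    HasSum (fun i => ⟪adjoint (Q.tmulL (e i)) y, adjoint (Q.tmulL (e i)) z⟫) ⟪y, z⟫ := by
  refine ((Q.tensorBasis e).hasSum_inner_mul_inner y z).prod_fiberwise fun i => ?_
  simpa [adjoint_inner_left, adjoint_inner_right] using
    e.hasSum_inner_mul_inner (adjoint (Q.tmulL (e i)) y) (adjoint (Q.tmulL (e i)) z)

/-- The slice `(ω_{ξ,η} ⊗ id)(X)` of an operator on `H ⊗ H` by a vector functional. It is defined
by compression with creation operators, rather than as `Q.sliceL (vecFunctional H ξ η) X`, so that
it can be composed with operators directly. -/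
def vecSlice (ξ η : H) (X : B H2) : B H :=
  adjoint (Q.tmulL η) ∘L X ∘L Q.tmulL ξ

lemma inner_vecSlice (ξ η u v : H) (X : B H2) :
    ⟪u, Q.vecSlice ξ η X v⟫ = ⟪Q.tmul η u, X (Q.tmul ξ v)⟫ := by
  simp [vecSlice, adjoint_inner_right]

lemma norm_vecSlice_le (ξ η : H) (X : B H2) : ‖Q.vecSlice ξ η X‖ ≤ ‖X‖ * (‖η‖ * ‖ξ‖) := by
  calc ‖Q.vecSlice ξ η X‖ ≤ ‖adjoint (Q.tmulL η)‖ * (‖X‖ * ‖Q.tmulL ξ‖) :=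
        (opNorm_comp_le _ _).trans (by gcongr; exact opNorm_comp_le _ _)
    _ ≤ ‖η‖ * (‖X‖ * ‖ξ‖) := by
        rw [LinearIsometryEquiv.norm_map]
        gcongr <;> exact Q.norm_tmulL_le _
    _ = ‖X‖ * (‖η‖ * ‖ξ‖) := mul_left_comm _ _ _

lemma vecSlice_tensorOp_mul (ξ η : H) (x : B H) (X : B H2) :
    Q.vecSlice ξ η (Q.tensorOp 1 x * X) = x * Q.vecSlice ξ η X := by
  have h : adjoint (Q.tmulL η) ∘L Q.tensorOp 1 x = x ∘L adjoint (Q.tmulL η) :=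
    Q.ext_tmul fun a b => by simp [Q.tensorOp_apply, adjoint_tmulL_tmul]
  calc Q.vecSlice ξ η (Q.tensorOp 1 x * X)
      = (adjoint (Q.tmulL η) ∘L Q.tensorOp 1 x) ∘L X ∘L Q.tmulL ξ := rfl
    _ = x * Q.vecSlice ξ η X := by rw [h]; rfl

lemma vecSlice_mul_tensorOp (ξ η : H) (x : B H) (X : B H2) :
    Q.vecSlice ξ η (X * Q.tensorOp 1 x) = Q.vecSlice ξ η X * x := by
  ext v
  simp [vecSlice, Q.tensorOp_apply]

lemma vecSlice_mem {N : VonNeumannAlgebra H} {X : B H2}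
    (hX : ∀ b ∈ N.commutant, Commute X (Q.tensorOp 1 b)) (ξ η : H) : Q.vecSlice ξ η X ∈ N := by
  rw [← N.commutant_commutant, VonNeumannAlgebra.mem_commutant_iff]
  intro b hb
  rw [← vecSlice_tensorOp_mul, ← vecSlice_mul_tensorOp, (hX b hb).eq]

lemma vecSlice_W_mem (ξ η : H) : Q.vecSlice ξ η Q.W ∈ Q.Mhat :=
  Q.vecSlice_mem (fun b hb => Q.W_mem 1 (one_mem _) b hb) ξ η

theorem hasWeakSum_vecSlice {ι : Type*} (e : HilbertBasis ι ℂ H) (ξ η : H) (X Y : B H2) :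
    HasWeakSum (fun i => star (Q.vecSlice η (e i) Y) * Q.vecSlice ξ (e i) X)
      (Q.vecSlice ξ η (star Y * X)) := by
  refine hasWeakSum_iff.2 fun u v => ?_
  have hterm (i : ι) : ⟪u, (star (Q.vecSlice η (e i) Y) * Q.vecSlice ξ (e i) X) v⟫ =
      ⟪adjoint (Q.tmulL (e i)) (Y (Q.tmul η u)), adjoint (Q.tmulL (e i)) (X (Q.tmul ξ v))⟫ := by
    rw [star_eq_adjoint, mul_apply_eq_comp, adjoint_inner_right]
    rfl
  rw [inner_vecSlice, mul_apply_eq_comp, star_eq_adjoint, adjoint_inner_right]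
  simpa only [hterm] using Q.hasSum_inner_adjoint_tmulL e (Y (Q.tmul η u)) (X (Q.tmul ξ v))

lemma hasWeakSum_vecSlice_Delta {ι : Type*} (e : HilbertBasis ι ℂ H) (ξ η : H) (x : B H) :
    HasWeakSum (fun i => star (Q.vecSlice η (e i) Q.W) * x * Q.vecSlice ξ (e i) Q.W)
      (Q.vecSlice ξ η (Q.Delta x)) := by
  simpa only [vecSlice_tensorOp_mul, mul_assoc, Delta] using
    Q.hasWeakSum_vecSlice e ξ η (Q.tensorOp 1 x * Q.W) Q.W

theorem vecSlice_Delta_map {E : B H →L[ℂ] B H}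
    (hE : ∀ a ∈ Q.Mhat, ∀ b ∈ Q.Mhat, ∀ x, E (a * x * b) = a * E x * b) (ξ η : H) (x : B H) :
    Q.vecSlice ξ η (Q.Delta (E x)) = E (Q.vecSlice ξ η (Q.Delta x)) := by
  obtain ⟨_, e, -⟩ := exists_hilbertBasis ℂ H
  exact (Q.hasWeakSum_vecSlice_Delta e ξ η (E x)).unique <|
    (Q.hasWeakSum_vecSlice_Delta e ξ η x).map hE (fun _ => Q.vecSlice_W_mem _ _)
      (fun _ => Q.vecSlice_W_mem _ _) (Q.hasWeakSum_vecSlice e η η Q.W Q.W)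
      (Q.hasWeakSum_vecSlice e ξ ξ Q.W Q.W)

lemma isNormalFunctional_ext {f g : B H2 →ₗ[ℂ] ℂ} (hf : IsNormalFunctional H2 f)
    (hg : IsNormalFunctional H2 g) (h : ∀ x y, f (Q.tensorOp x y) = g (Q.tensorOp x y)) :
    f = g := by
  obtain ⟨_, e, -⟩ := exists_hilbertBasis ℂ H
  refine hf.ext_hilbertBasis hg (Q.tensorBasis e) fun p q => ?_
  simp only [tensorBasis_apply, ← tensorOp_rankOne, h]

lemma hasSum_inner_tmul {ω : B H →ₗ[ℂ] ℂ} {ξ η : ℕ → H} (hξ : Summable fun n => ‖ξ n‖ ^ 2)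
    (hη : Summable fun n => ‖η n‖ ^ 2) (hω : ∀ x : B H, HasSum (fun n => ⟪η n, x (ξ n)⟫) (ω x))
    (u v : H) (X : B H2) :
    HasSum (fun n => ⟪Q.tmul (η n) u, X (Q.tmul (ξ n) v)⟫) ⟪u, Q.sliceL ω X v⟫ := by
  obtain ⟨ρ, hρ, hsum⟩ : ∃ ρ : B H2 →ₗ[ℂ] ℂ, IsNormalFunctional H2 ρ ∧
      ∀ X : B H2, HasSum (fun n => ⟪Q.tmul (η n) u, X (Q.tmul (ξ n) v)⟫) (ρ X) := by
    apply exists_isNormalFunctional <;> simp only [norm_tmul, mul_pow]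
    exacts [hξ.mul_right _, hη.mul_right _]
  have hslice : ⟪u, Q.sliceL ω X v⟫ = Q.funcTensor ω (vecFunctional H v u) X :=
    Q.sliceL_char ω X v u
  have hnormal : IsNormalFunctional H2 (Q.funcTensor ω (vecFunctional H v u)) :=
    Q.funcTensor_normal _ _ ⟨ξ, η, hξ, hη, hω⟩ (isNormalFunctional_vecFunctional v u)
  have htensor (x y : B H) : Q.funcTensor ω (vecFunctional H v u) (Q.tensorOp x y) =
      ρ (Q.tensorOp x y) := by
    rw [Q.funcTensor_elem]
    refine ((hω x).mul_right ⟪u, y v⟫).unique ?_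
    simpa only [Q.tensorOp_apply, Q.tmul_inner] using hsum (Q.tensorOp x y)
  rw [hslice, Q.isNormalFunctional_ext hnormal hρ htensor]
  exact hsum X

theorem hasSum_vecSlice {ω : B H →ₗ[ℂ] ℂ} {ξ η : ℕ → H} (hξ : Summable fun n => ‖ξ n‖ ^ 2)
    (hη : Summable fun n => ‖η n‖ ^ 2) (hω : ∀ x : B H, HasSum (fun n => ⟪η n, x (ξ n)⟫) (ω x))
    (X : B H2) : HasSum (fun n => Q.vecSlice (ξ n) (η n) X) (Q.sliceL ω X) := by
  have hsum : Summable fun n => Q.vecSlice (ξ n) (η n) X :=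
    .of_norm_bounded ((summable_mul_of_summable_sq hη hξ).mul_left ‖X‖)
      fun n => Q.norm_vecSlice_le _ _ X
  convert hsum.hasSum
  ext v
  refine ext_inner_left ℂ fun u => ?_
  refine (Q.hasSum_inner_tmul hξ hη hω u v X).unique ?_
  simpa [inner_vecSlice] using
    (hsum.hasSum.mapL (ContinuousLinearMap.apply ℂ H v)).mapL (innerSL ℂ u)

end LCQG

end TensorSquare

section CompletelyBounded

open ContinuousLinearMap

variable {K : Type*} [NormedAddCommGroup K] [InnerProductSpace ℂ K]

lemma comp_amplify_one_comp (E : B K →ₗ[ℂ] B K) (x : B K) :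
    coordProj K 1 0 ∘L amplify K E 1 (coordIncl K 1 0 ∘L x ∘L coordProj K 1 0) ∘L
      coordIncl K 1 0 = E x := by
  have hcompress (y : B K) :
      coordProj K 1 0 ∘L (coordIncl K 1 0 ∘L y ∘L coordProj K 1 0) ∘L coordIncl K 1 0 = y := by
    ext v
    simp [coordProj, coordIncl]
  simp only [amplify, Fin.sum_univ_one, Fin.isValue, hcompress]

lemma CompletelyBounded.exists_norm_le {E : B K →ₗ[ℂ] B K} (hE : CompletelyBounded K E) :
    ∃ C : ℝ, ∀ x, ‖E x‖ ≤ C * ‖x‖ := by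
  obtain ⟨C, hC, hE⟩ := hE
  set p := coordProj K 1 0
  set i := coordIncl K 1 0
  refine ⟨‖p‖ * (C * (‖i‖ * ‖p‖)) * ‖i‖, fun x => ?_⟩
  calc ‖E x‖ = ‖p ∘L amplify K E 1 (i ∘L x ∘L p) ∘L i‖ := by rw [comp_amplify_one_comp]
    _ ≤ ‖p‖ * (‖amplify K E 1 (i ∘L x ∘L p)‖ * ‖i‖) :=
      (opNorm_comp_le _ _).trans (by gcongr; exact opNorm_comp_le _ _)
    _ ≤ ‖p‖ * (C * (‖i‖ * (‖x‖ * ‖p‖)) * ‖i‖) := by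
      gcongr
      refine (hE 1 _).trans ?_
      gcongr
      exact (opNorm_comp_le _ _).trans (by gcongr; exact opNorm_comp_le _ _)
    _ = ‖p‖ * (C * (‖i‖ * ‖p‖)) * ‖i‖ * ‖x‖ := by ring

end CompletelyBounded

theorem cb_bimodule_map_commutes_with_slices_general (Q : LCQG H H2)
    (E : B H →L[ℂ] B H)
    (hmod : ∀ a ∈ Q.Mhat, ∀ b ∈ Q.Mhat, ∀ x : B H, E (a * x * b) = a * E x * b)
    (x : B H) (ω : B H →ₗ[ℂ] ℂ) (hω : IsNormalFunctional H ω) :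
    Q.sliceL ω (Q.Delta (E x)) = E (Q.sliceL ω (Q.Delta x)) := by
  obtain ⟨ξ, η, hξ, hη, hω⟩ := hω
  have hsum := Q.hasSum_vecSlice hξ hη hω (Q.Delta (E x))
  simp only [Q.vecSlice_Delta_map hmod] at hsum
  exact hsum.unique ((Q.hasSum_vecSlice hξ hη hω (Q.Delta x)).mapL E)

/-- **Theorem 2 (Sołtan–Viselter).** Let `𝔾` be a locally compact quantum group and let
`E : B(L²(𝔾)) → B(L²(𝔾))` be a completely bounded `L∞(𝔾̂)`-bimodule map.  Then
`(ω ⊗ id)Δ̄(E(x)) = E((ω ⊗ id)Δ̄(x))` for every `x ∈ B(L²(𝔾))` and every normal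
functional `ω ∈ B(L²(𝔾))_*`, where `Δ̄(x) = W*(1 ⊗ x)W`. -/
theorem cb_bimodule_map_commutes_with_slices (Q : LCQG H H2)
    (E : B H →ₗ[ℂ] B H) (hcb : CompletelyBounded H E)
    (hmod : ∀ a ∈ Q.Mhat, ∀ b ∈ Q.Mhat, ∀ x : B H, E (a * x * b) = a * E x * b)
    (x : B H) (ω : B H →ₗ[ℂ] ℂ) (hω : IsNormalFunctional H ω) :
    Q.sliceL ω (Q.Delta (E x)) = E (Q.sliceL ω (Q.Delta x)) := by
  obtain ⟨C, hC⟩ := hcb.exists_norm_le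
  exact cb_bimodule_map_commutes_with_slices_general H H2 Q (E.mkContinuous C hC) hmod x ω hω

end LCQGNote
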